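/- Let F be the free group with basis {ξ, η}, let n₀ ≥ 1, and let γ ∈ F be an element whose reduced word contains at least one letter from {η, η⁻¹}. Then for all sufficiently large integers i, the element ξ^{i·n₀} γ² is not equal to p^n for any primitive element p of F and any integer n ≥ 1. In particular there are infinitely many i for which ξ^{i·n₀} γ² is not a power of any primitive element. -/

import Mathlib

/-- An element of the free group of rank 2 is primitive if it belongs to some free basis. -/
def IsPrimitive (p : FreeGroup Bool) : Prop :=
  ∃ b : FreeGroupBasis Bool (FreeGroup Bool), b true = p

/-!
For large `k`, the reduced word of `ξ ^ k * γ ^ m` is a long run of letters `ξ` followed by a word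
of bounded length. If it is the word `W * Q ^ n * W⁻¹` of a proper power `p ^ n`, then its first
`W * Q` fits into the run of `ξ`, so that `p`, and with it `γ`, is a power of `ξ`. It remains to
see that `ξ ^ k * γ ^ m` itself is not primitive. If `γ` has exponent sum `b ≠ 0` in `η`, there is
a homomorphism to the affine group of the complex line that kills `ξ ^ k` and `γ ^ m` and has
noncommutative image, whereas a homomorphism killing a primitive element has cyclic image. If
`b = 0`, then the exponent sums of `ξ ^ k * γ ^ m` are a large integer and `0`, whereas those of a
primitive element are coprime.
-/

open FreeGroup (of lift)

section Words

open FreeGroup FreeGroup.reduceCyclically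

variable {α : Type*} [DecidableEq α] {x : α} {g p : FreeGroup α} {k n : ℕ}

theorem mem_zpowers_of_iff_forall_mem_toWord :
    g ∈ Subgroup.zpowers (of x) ↔ ∀ l ∈ g.toWord, l.1 = x := by
  constructor
  · rintro ⟨z, rfl⟩ l hl
    obtain ⟨n, rfl | rfl⟩ := z.eq_nat_or_neg
    · simp_all [toWord_of_pow]
    · simp_all [toWord_of_pow, toWord_inv, invRev]
  · suffices ∀ L : List (α × Bool), (∀ l ∈ L, l.1 = x) → mk L ∈ Subgroup.zpowers (of x) by
      simpa only [mk_toWord] using this g.toWord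
    intro L hL
    induction L with
    | nil => exact one_mem _
    | cons l L ih =>
      obtain ⟨hl, hL⟩ := List.forall_mem_cons.mp hL
      rw [← List.singleton_append, ← mul_mk]
      refine mul_mem ?_ (ih hL)
      obtain ⟨y, _ | _⟩ := l
      · exact hl ▸ inv_mem (Subgroup.mem_zpowers (of y))
      · exact hl ▸ Subgroup.mem_zpowers (of y)

theorem toWord_pow_succ (g : FreeGroup α) (n : ℕ) :
    (g ^ (n + 1)).toWord = conjugator g.toWord ++
      (List.replicate (n + 1) (reduceCyclically g.toWord)).flatten ++
      invRev (conjugator g.toWord) := by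
  rw [toWord_pow, reduce_flatten_replicate_succ isReduced_toWord]

theorem mem_zpowers_of_iff_forall_mem_conjugator_append :
    g ∈ Subgroup.zpowers (of x) ↔
      ∀ l ∈ conjugator g.toWord ++ reduceCyclically g.toWord, l.1 = x := by
  rw [mem_zpowers_of_iff_forall_mem_toWord]
  conv_lhs => rw [← conj_conjugator_reduceCyclically g.toWord]
  simp only [List.mem_append, invRev, List.mem_reverse, List.mem_map]
  grind

theorem exists_toWord_of_pow_mul_eq_append (x : α) (k : ℕ) (g : FreeGroup α) :
    ∃ u v, (of x ^ k * g).toWord = u ++ v ∧ (∀ l ∈ u, l.1 = x) ∧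
      k ≤ u.length + 2 * g.norm ∧ v.length ≤ g.norm := by
  obtain ⟨u, v, huv, hu, hv⟩ :=
    List.sublist_append_iff.mp (toWord_mul_sublist (of x ^ k) g)
  have hnorm : (of x ^ k * g).norm = u.length + v.length := by
    rw [FreeGroup.norm, huv, List.length_append]
  have hk : k ≤ (of x ^ k * g).norm + g.norm := by
    simpa using FreeGroup.norm_mul_le (of x ^ k * g) g⁻¹
  have hvg : v.length ≤ g.norm := hv.length_le
  refine ⟨u, v, huv, fun l hl => ?_, by lia, hvg⟩
  rw [toWord_of_pow] at hu
  rw [List.eq_of_mem_replicate (hu.subset hl)]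

theorem mem_zpowers_of_of_pow_mul_eq_pow (hk : 3 * g.norm ≤ k) (hn : n ≠ 1)
    (h : of x ^ k * g = p ^ n) : g ∈ Subgroup.zpowers (of x) := by
  suffices hp : p ^ n ∈ Subgroup.zpowers (of x) by
    rw [← h] at hp
    exact (Subgroup.mul_mem_cancel_left _ (Subgroup.npow_mem_zpowers _ _)).mp hp
  obtain rfl | ⟨n, rfl⟩ : n = 0 ∨ ∃ j, n = j + 1 + 1 := by
    obtain _ | _ | n := n <;> simp_all
  · simp
  refine pow_mem (mem_zpowers_of_iff_forall_mem_conjugator_append.mpr ?_) _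
  set W := conjugator p.toWord
  set Q := reduceCyclically p.toWord
  obtain ⟨u, v, huv, hu, hku, hv⟩ := exists_toWord_of_pow_mul_eq_append x k g
  set R := (List.replicate (n + 1) Q).flatten ++ invRev W with hR
  have hWQ : u ++ v = (W ++ Q) ++ R := by
    rw [← huv, h, toWord_pow_succ, List.replicate_succ, List.flatten_cons]
    simp only [W, Q, R, List.append_assoc]
  have hlen : (W ++ Q).length ≤ R.length := by
    simp only [hR, List.replicate_succ, List.flatten_cons, List.length_append, invRev_length]
    lia
  have hWQu : (W ++ Q).length ≤ u.length := by
    have := congrArg List.length hWQ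
    rw [List.length_append, List.length_append (bs := R)] at this
    lia
  have hprefix : W ++ Q <+: u :=
    List.prefix_of_prefix_length_le ⟨R, hWQ.symm⟩ (List.prefix_append u v) hWQu
  exact fun l hl => hu l (hprefix.subset hl)

end Words

theorem mem_zpowers_of_of_pow_mem {α : Type*} {x : α} {g : FreeGroup α} {n : ℕ} (hn : n ≠ 0)
    (h : g ^ n ∈ Subgroup.zpowers (of x)) : g ∈ Subgroup.zpowers (of x) := by
  classical
  obtain ⟨n, rfl⟩ := Nat.exists_eq_succ_of_ne_zero hn
  rw [mem_zpowers_of_iff_forall_mem_toWord, toWord_pow_succ] at h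
  rw [mem_zpowers_of_iff_forall_mem_conjugator_append]
  intro l hl
  refine h l ?_
  simp only [List.replicate_succ, List.flatten_cons, List.mem_append] at hl ⊢
  tauto

section ExponentSum

variable {α : Type*} [DecidableEq α]

/-- The exponent sum of the generator `s`, as a homomorphism to the integers, written
multiplicatively. -/
def exponentSum (s : α) : FreeGroup α →* Multiplicative ℤ :=
  lift (Pi.mulSingle s (Multiplicative.ofAdd 1))

@[simp]
theorem exponentSum_of_self (s : α) : exponentSum s (of s) = Multiplicative.ofAdd 1 := by
  simp [exponentSum]

@[simp]
theorem exponentSum_of_of_ne {s t : α} (h : t ≠ s) : exponentSum s (of t) = 1 := by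
  simp [exponentSum, h]

theorem map_eq_prod_zpow_exponentSum [Fintype α] {A : Type*} [CommGroup A]
    (f : FreeGroup α →* A) (g : FreeGroup α) :
    f g = ∏ s, f (of s) ^ (exponentSum s g).toAdd := by
  have h : f = ∏ s, (zpowersHom A (f (of s))).comp (exponentSum s) := by
    ext t
    rw [MonoidHom.finsetProd_apply, Finset.prod_eq_single t] <;> simp +contextual [eq_comm]
  conv_lhs => rw [h]
  simp [zpowersHom_apply]

end ExponentSum

namespace IsPrimitive

variable {p : FreeGroup Bool}

theorem commute_map {G : Type*} [Group G] (hp : IsPrimitive p) {f : FreeGroup Bool →* G}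
    (hf : f p = 1) (g h : FreeGroup Bool) : Commute (f g) (f h) := by
  obtain ⟨b, rfl⟩ := hp
  let φ : FreeGroup Bool →* Multiplicative ℤ :=
    b.lift (Pi.mulSingle false (Multiplicative.ofAdd 1))
  have hfφ : f = (zpowersHom G (f (b false))).comp φ := by
    refine b.ext_hom _ _ fun s => ?_
    cases s <;> simp [φ, hf]
  rw [hfφ]
  exact (Commute.all (φ g) (φ h)).map (zpowersHom G (f (b false)))

theorem isCoprime_exponentSum (hp : IsPrimitive p) :
    IsCoprime (exponentSum true p).toAdd (exponentSum false p).toAdd := by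
  obtain ⟨b, rfl⟩ := hp
  let φ : FreeGroup Bool →* Multiplicative ℤ := b.lift fun _ => Multiplicative.ofAdd 1
  refine ⟨(φ (of true)).toAdd, (φ (of false)).toAdd, ?_⟩
  have hφ : (φ (b true)).toAdd = 1 := by simp [φ]
  rw [map_eq_prod_zpow_exponentSum, Fintype.prod_bool] at hφ
  simpa [mul_comm, add_comm] using hφ

end IsPrimitive

section Affine

open AffineEquiv

theorem linear_homothetyUnitsMulHom {R V P : Type*} [CommRing R] [AddCommGroup V] [Module R V]
    [AddTorsor V P] (a : P) (c : Rˣ) (v : V) :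
    (homothetyUnitsMulHom a c).linear v = (c : R) • v := by
  change (AffineMap.homothety a (c : R)).linear v = (c : R) • v
  simp

theorem exists_eq_homothetyUnitsMulHom {K V P : Type*} [Field K] [AddCommGroup V] [Module K V]
    [AddTorsor V P] {e : P ≃ᵃ[K] P} {c : Kˣ} (hc : c ≠ 1) (he : ∀ v, e.linear v = (c : K) • v) :
    ∃ a, e = homothetyUnitsMulHom a c := by
  obtain ⟨o⟩ : Nonempty P := AddTorsor.nonempty
  have hc' : 1 - (c : K) ≠ 0 := sub_ne_zero.mpr fun h => hc (Units.ext h.symm)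
  set v := e o -ᵥ o
  set a := (1 - c : K)⁻¹ • v +ᵥ o with ha
  have hfix : e a = a := by
    have heo : e o = v +ᵥ o := (vsub_vadd (e o) o).symm
    have hcoeff : (c : K) * (1 - c : K)⁻¹ + 1 = (1 - c : K)⁻¹ := by
      field_simp
      ring
    rw [ha, e.map_vadd, he, heo, vadd_vadd, smul_smul]
    nth_rw 2 [← one_smul K v]
    rw [← add_smul, hcoeff]
  refine ⟨a, AffineEquiv.ext fun p => ?_⟩
  rw [coe_homothetyUnitsMulHom_apply, AffineMap.homothety_apply, ← he, ← vsub_vadd p a,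
    e.map_vadd, hfix, vsub_vadd]

variable {K : Type*} [Field K]

/-- The action of the free group of rank 2 on the affine line by `ξ ↦ (z ↦ x * z)` and
`η ↦ (z ↦ y * z + 1)`. The translation in the second map makes the two maps noncommuting as soon
as `x ≠ 1`. -/
def affineAction (x y : Kˣ) : FreeGroup Bool →* K ≃ᵃ[K] K :=
  lift fun s => bif s then homothetyUnitsMulHom 0 x
    else (homothetyUnitsMulHom 0 y).trans (constVAdd K K 1)

theorem linear_affineAction (x y : Kˣ) (g : FreeGroup Bool) (z : K) :
    (affineAction x y g).linear z =
      (↑(x ^ (exponentSum true g).toAdd * y ^ (exponentSum false g).toAdd) : K) • z := by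
  let χ : FreeGroup Bool →* Kˣ := lift fun s => bif s then x else y
  have hχ : linearHom.comp (affineAction x y) =
      (DistribMulAction.toModuleAut K K).comp χ := by
    ext s z
    have hη : ((homothetyUnitsMulHom 0 y).trans (constVAdd K K 1)).linear z = y * z :=
      linear_homothetyUnitsMulHom 0 y z
    cases s <;> simp [χ, affineAction, linear_homothetyUnitsMulHom, hη, Units.smul_def]
  have hχg : χ g = x ^ (exponentSum true g).toAdd * y ^ (exponentSum false g).toAdd := by
    rw [map_eq_prod_zpow_exponentSum, Fintype.prod_bool]
    simp [χ]
  rw [← hχg]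
  exact DFunLike.congr_fun (DFunLike.congr_fun hχ g) z

theorem not_isPrimitive_pow_mul_pow_of_units {x y ζ : Kˣ} {γ : FreeGroup Bool} {k m : ℕ}
    (hx : x ≠ 1) (hxk : x ^ k = 1) (hζ : ζ ≠ 1) (hζm : ζ ^ m = 1)
    (hγ : x ^ (exponentSum true γ).toAdd * y ^ (exponentSum false γ).toAdd = ζ) :
    ¬ IsPrimitive (of true ^ k * γ ^ m) := by
  intro hp
  have hξ : affineAction x y (of true) ^ k = 1 := by
    simp [affineAction, ← map_pow, hxk]
  have hγ1 : affineAction x y γ ^ m = 1 := by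
    obtain ⟨a, ha⟩ := exists_eq_homothetyUnitsMulHom hζ (hγ ▸ linear_affineAction x y γ)
    rw [ha, ← map_pow, hζm, map_one]
  have hcomm := hp.commute_map (f := affineAction x y) (by simp [hξ, hγ1]) (of true) (of false)
  refine hx (Units.ext ?_)
  simpa [affineAction, AffineMap.homothety_apply] using DFunLike.congr_fun hcomm.eq 0

end Affine

section NotPrimitive

variable {γ : FreeGroup Bool} {k m : ℕ}

theorem not_isPrimitive_pow_mul_pow_of_exponentSum_ne_zero (hk : 2 ≤ k) (hm : 2 ≤ m)
    (hγ : (exponentSum false γ).toAdd ≠ 0) : ¬ IsPrimitive (of true ^ k * γ ^ m) := by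
  set a := (exponentSum true γ).toAdd
  set b := (exponentSum false γ).toAdd
  have hN : (k * m * b).natAbs ≠ 0 := by
    rw [Int.natAbs_ne_zero]
    positivity
  obtain ⟨ω, hω⟩ : ∃ ω : ℂˣ, IsPrimitiveRoot ω (k * m * b).natAbs :=
    ⟨_, (Complex.isPrimitiveRoot_exp _ hN).isUnit_unit hN⟩
  have hω1 (z : ℤ) : ω ^ z = 1 ↔ k * m * b ∣ z := by
    rw [hω.zpow_eq_one_iff_dvd, Int.natAbs_dvd]
  have not_mul_dvd {j : ℕ} (hj : 2 ≤ j) {c : ℤ} (hc : c ≠ 0) : ¬ j * c ∣ c := fun h => by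
    have hj1 : (j : ℤ) ∣ 1 := (mul_dvd_mul_iff_right hc).mp (by rwa [one_mul])
    have := Int.le_of_dvd one_pos hj1
    lia
  have hωγ : (ω ^ (m * b)) ^ a * (ω ^ (k - m * a)) ^ b = ω ^ (k * b) := by
    rw [← zpow_mul, ← zpow_mul, ← zpow_add]
    ring_nf
  -- `ω` has order `k * m * |b|`, so `ω ^ (m * b)` has order `k` and `ω ^ (k * b)` has order `m`.
  refine not_isPrimitive_pow_mul_pow_of_units ?_ ?_ ?_ ?_ hωγ
  · rw [Ne, hω1, mul_assoc]
    exact not_mul_dvd hk (by positivity)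
  · rw [← zpow_natCast, ← zpow_mul, hω1]
    exact ⟨1, by ring⟩
  · rw [Ne, hω1, mul_comm (k : ℤ), mul_assoc]
    exact not_mul_dvd hm (by positivity)
  · rw [← zpow_natCast, ← zpow_mul, hω1]
    exact ⟨1, by ring⟩

theorem not_isPrimitive_pow_mul_pow_of_exponentSum_eq_zero
    (hγ : (exponentSum false γ).toAdd = 0) (hk : (m * (exponentSum true γ).toAdd).natAbs + 1 < k) :
    ¬ IsPrimitive (of true ^ k * γ ^ m) := by
  intro hp
  have hunit : IsUnit (k + m * (exponentSum true γ).toAdd) := by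
    simpa [hγ, isCoprime_zero_right] using hp.isCoprime_exponentSum
  rw [Int.isUnit_iff] at hunit
  lia

theorem eventually_not_isPrimitive_pow_mul_pow (γ : FreeGroup Bool) (hm : 2 ≤ m) :
    ∀ᶠ k in Filter.atTop, ¬ IsPrimitive (of true ^ k * γ ^ m) := by
  by_cases hγ : (exponentSum false γ).toAdd = 0
  · filter_upwards [Filter.eventually_gt_atTop _] with k hk
    exact not_isPrimitive_pow_mul_pow_of_exponentSum_eq_zero hγ hk
  · filter_upwards [Filter.eventually_ge_atTop 2] with k hk
    exact not_isPrimitive_pow_mul_pow_of_exponentSum_ne_zero hk hm hγ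

end NotPrimitive

theorem eventually_not_power_of_primitive_general {γ : FreeGroup Bool}
    (hγ : γ ∉ Subgroup.zpowers (of true)) {m : ℕ} (hm : 2 ≤ m) :
    ∀ᶠ k : ℕ in Filter.atTop, ∀ p, IsPrimitive p → ∀ n : ℕ, of true ^ k * γ ^ m ≠ p ^ n := by
  filter_upwards [eventually_not_isPrimitive_pow_mul_pow γ hm,
    Filter.eventually_ge_atTop (3 * (γ ^ m).norm)] with k hprim hk p hp n h
  obtain rfl | hn := eq_or_ne n 1
  · exact hprim (by rwa [h, pow_one])
  · exact hγ (mem_zpowers_of_of_pow_mem (by lia) (mem_zpowers_of_of_pow_mul_eq_pow hk hn h))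

/-- In the free group on `ξ = of true`, `η = of false`: if `n₀ ≥ 1` and the reduced word of `γ`
contains a letter `η^{±1}`, then for all sufficiently large `i` the element `ξ^{i n₀} γ²` is not
a positive power of a primitive element; in particular this holds for infinitely many `i`. -/
theorem eventually_not_power_of_primitive (n₀ : ℕ) (h₀ : 1 ≤ n₀) (γ : FreeGroup Bool)
    (hγ : 1 ≤ γ.toWord.countP (fun p => p.1 == false)) :
    (∃ I : ℕ, ∀ i : ℕ, I ≤ i → ∀ p : FreeGroup Bool, IsPrimitive p →
      ∀ n : ℕ, 1 ≤ n → (FreeGroup.of true) ^ (i * n₀) * γ ^ 2 ≠ p ^ n) ∧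
    {i : ℕ | ∀ p : FreeGroup Bool, IsPrimitive p →
      ∀ n : ℕ, 1 ≤ n → (FreeGroup.of true) ^ (i * n₀) * γ ^ 2 ≠ p ^ n}.Infinite := by
  have hγξ : γ ∉ Subgroup.zpowers (of true) := by
    obtain ⟨l, hl, hlη⟩ := List.countP_pos_iff.mp hγ
    exact fun h => by simp_all [mem_zpowers_of_iff_forall_mem_toWord.mp h l hl]
  have h := ((Filter.tendsto_id.atTop_mul_const' h₀).eventually
    (eventually_not_power_of_primitive_general hγξ le_rfl)).mono
    fun i hi p hp n (_ : 1 ≤ n) => hi p hp n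
  exact ⟨Filter.eventually_atTop.mp h, Nat.frequently_atTop_iff_infinite.mp h.frequently⟩
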